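/- arXiv:2505.22388 — 2 statements merged into one kernel-verified Lean document; each statement's English description precedes it below -/
import Mathlib

section
/- Let T, L, N ≥ 1 be integers, let F₀ ∈ ℝ^{T×L} with F₀ᵀF₀ invertible, and for i = 1, …, N+1 let λᵢ ∈ ℝ^L and εᵢ, ûᵢ ∈ ℝ^T; set ĉᵢ = F₀λᵢ + εᵢ + ûᵢ ∈ ℝ^T. Let w = (w₂, …, w_{N+1}) ∈ ℝ^N satisfy ∑_{i=2}^{N+1} wᵢ = 1 together with the perfect-fit equation ĉ₁ = ∑_{i=2}^{N+1} wᵢ ĉᵢ. Let f ∈ ℝ^L be arbitrary, and for each i let ε_{i,∗}, û_{i,∗} ∈ ℝ be arbitrary scalars; define c_{1,∗} = λ₁·f + ε_{1,∗}, ĉ_{i,∗} = λᵢ·f + ε_{i,∗} + û_{i,∗} for i = 2, …, N+1, and the row vector φ = fᵀ(F₀ᵀF₀)⁻¹F₀ᵀ ∈ ℝ^{1×T}. Then the exact identity holds: c_{1,∗} − ∑_{i=2}^{N+1} wᵢ ĉ_{i,∗} = φ(∑_{i=2}^{N+1} wᵢ ûᵢ) − φû₁ − ∑_{i=2}^{N+1}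 wᵢ û_{i,∗} + φ(∑_{i=2}^{N+1} wᵢ εᵢ) − φε₁ − ∑_{i=2}^{N+1} wᵢ(ε_{i,∗} − ε_{1,∗}). -/
open Matrix

/-!
The functional `φ v = fᵀ(F₀ᵀF₀)⁻¹F₀ᵀ v` predicts the post-treatment factor component from the
pre-treatment one: `φ (F₀ x) = x · f`, because `F₀ᵀF₀` is invertible. Applying it to the
pre-treatment fit therefore turns the unobservable gap `λ₁ · f - ∑ wᵢ (λᵢ · f)` into values of `φ`
on the pre-treatment errors. Since the weights sum to one, the post-treatment errors of the controls
may be centred at `ε_{1,*}`.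
-/

section WeightedErrors

variable {R Λ V M ι : Type*} [Semiring R] [AddCommMonoid Λ] [Module R Λ] [AddCommMonoid V]
  [Module R V] [AddCommGroup M] [Module R M] {s : Finset ι} {w : ι → R}

theorem sum_smul_sub_const_of_sum_eq_one (hw : ∑ i ∈ s, w i = 1) (x : ι → M) (c : M) :
    ∑ i ∈ s, w i • (x i - c) = ∑ i ∈ s, w i • x i - c := by
  simp only [smul_sub, Finset.sum_sub_distrib, ← Finset.sum_smul, hw, one_smul]

theorem sub_sum_smul_eq_of_fit {F : Λ →ₗ[R] V} {g : Λ →ₗ[R] M} {φ : V →ₗ[R] M}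
    (hφ : ∀ x, φ (F x) = g x) {lam₀ : Λ} {lam : ι → Λ} {eps₀ uhat₀ : V} {eps uhat : ι → V}
    (hfit : F lam₀ + eps₀ + uhat₀ = ∑ i ∈ s, w i • (F (lam i) + eps i + uhat i)) :
    g lam₀ - ∑ i ∈ s, w i • g (lam i) =
      φ (∑ i ∈ s, w i • uhat i) - φ uhat₀ + φ (∑ i ∈ s, w i • eps i) - φ eps₀ := by
  have hfit_image : g lam₀ + φ eps₀ + φ uhat₀ =
      ∑ i ∈ s, w i • g (lam i) + φ (∑ i ∈ s, w i • eps i) + φ (∑ i ∈ s, w i • uhat i) := by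
    simpa only [smul_add, Finset.sum_add_distrib, map_add, map_sum, map_smul, hφ] using
      congrArg φ hfit
  rw [add_assoc, ← eq_sub_iff_add_eq] at hfit_image
  rw [hfit_image]
  abel

theorem statement10_general {F : Λ →ₗ[R] V} {g : Λ →ₗ[R] M} {φ : V →ₗ[R] M}
    (hφ : ∀ x, φ (F x) = g x) (hw : ∑ i ∈ s, w i = 1)
    {lam₀ : Λ} {lam : ι → Λ} {eps₀ uhat₀ : V} {eps uhat : ι → V}
    (hfit : F lam₀ + eps₀ + uhat₀ = ∑ i ∈ s, w i • (F (lam i) + eps i + uhat i))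
    (epsStar₀ : M) (epsStar uhatStar : ι → M) :
    g lam₀ + epsStar₀ - ∑ i ∈ s, w i • (g (lam i) + epsStar i + uhatStar i) =
      φ (∑ i ∈ s, w i • uhat i) - φ uhat₀ - ∑ i ∈ s, w i • uhatStar i +
        φ (∑ i ∈ s, w i • eps i) - φ eps₀ - ∑ i ∈ s, w i • (epsStar i - epsStar₀) := by
  calc
    g lam₀ + epsStar₀ - ∑ i ∈ s, w i • (g (lam i) + epsStar i + uhatStar i)
      = (g lam₀ - ∑ i ∈ s, w i • g (lam i)) - ∑ i ∈ s, w i • uhatStar i -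
          (∑ i ∈ s, w i • epsStar i - epsStar₀) := by
        simp only [smul_add, Finset.sum_add_distrib]
        abel
    _ = _ := by
        rw [sub_sum_smul_eq_of_fit hφ hfit, sum_smul_sub_const_of_sum_eq_one hw]
        abel

end WeightedErrors

section LeastSquares

variable {R m n : Type*} [CommRing R] [Fintype m] [Fintype n] [DecidableEq n]

/-- The linear functional `v ↦ fᵀ(FᵀF)⁻¹Fᵀ v`: over `ℝ`, the pairing with `f` of the coefficients
of the least-squares projection of `v` onto the columns of `F`. The matrix inverse is `0` when
`FᵀF` is not invertible. -/
noncomputable def leastSquaresFunctional (F : Matrix m n R) (f : n → R) : (m → R) →ₗ[R] R :=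
  dotProductBilin R R f ∘ₗ (Fᵀ * F)⁻¹.mulVecLin ∘ₗ Fᵀ.mulVecLin

theorem leastSquaresFunctional_apply (F : Matrix m n R) (f : n → R) (v : m → R) :
    leastSquaresFunctional F f v = f ⬝ᵥ ((Fᵀ * F)⁻¹ *ᵥ (Fᵀ *ᵥ v)) :=
  rfl

theorem leastSquaresFunctional_mulVec {F : Matrix m n R} (hF : IsUnit (Fᵀ * F)) (f x : n → R) :
    leastSquaresFunctional F f (F *ᵥ x) = f ⬝ᵥ x := by
  rw [leastSquaresFunctional_apply, mulVec_mulVec, mulVec_mulVec, Matrix.mul_assoc,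
    nonsing_inv_mul _ ((isUnit_iff_isUnit_det _).mp hF), one_mulVec]

end LeastSquares

/-- exact error decomposition identity for the synthetic control estimator.
Unit `1` is treated; the `N` control units are indexed by `Fin N` via `Fin.succ`.
`φ v = fᵀ(F₀ᵀF₀)⁻¹F₀ᵀ v`.  Starred quantities refer to a single post-treatment period. -/
theorem statement10
    (T L N : ℕ) (hT : 1 ≤ T) (hL : 1 ≤ L) (hN : 1 ≤ N)
    (F₀ : Matrix (Fin T) (Fin L) ℝ) (hF₀ : IsUnit (F₀ᵀ * F₀))
    (lam : Fin (N + 1) → Fin L → ℝ)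
    (eps uhat : Fin (N + 1) → Fin T → ℝ)
    (w : Fin N → ℝ) (hw1 : ∑ i : Fin N, w i = 1)
    -- perfect pre-treatment fit: ĉ₁ = ∑ᵢ wᵢ ĉᵢ, where ĉᵢ = F₀λᵢ + εᵢ + ûᵢ
    (hfit : F₀ *ᵥ lam 0 + eps 0 + uhat 0 =
      ∑ i : Fin N, w i • (F₀ *ᵥ lam i.succ + eps i.succ + uhat i.succ))
    (f : Fin L → ℝ) (epsStar uhatStar : Fin (N + 1) → ℝ)
    (φ : (Fin T → ℝ) → ℝ) (hφ : ∀ v, φ v = f ⬝ᵥ ((F₀ᵀ * F₀)⁻¹ *ᵥ (F₀ᵀ *ᵥ v))) :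
    -- c_{1,*} − ∑ᵢ wᵢ ĉ_{i,*}
    (lam 0 ⬝ᵥ f + epsStar 0) -
        ∑ i : Fin N, w i * (lam i.succ ⬝ᵥ f + epsStar i.succ + uhatStar i.succ) =
      φ (∑ i : Fin N, w i • uhat i.succ) - φ (uhat 0) -
        (∑ i : Fin N, w i * uhatStar i.succ) +
        φ (∑ i : Fin N, w i • eps i.succ) - φ (eps 0) -
        ∑ i : Fin N, w i * (epsStar i.succ - epsStar 0) := by
  obtain rfl : φ = leastSquaresFunctional F₀ f := funext hφ
  simpa [dotProduct_comm f] using statement10_general (F := F₀.mulVecLin)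
    (g := dotProductBilin ℝ ℝ f) (leastSquaresFunctional_mulVec hF₀ f) hw1 hfit
    (epsStar 0) (epsStar ·.succ) (uhatStar ·.succ)
end

section
/- Let T, L ≥ 1, let F ∈ ℝ^{T×L} have all entries bounded in absolute value by F̄ > 0, suppose the smallest eigenvalue of (1/T)FᵀF is at least ξ > 0, and let f ∈ ℝ^L with ‖f‖_∞ ≤ F̄. Denote by f_s ∈ ℝ^L the s-th row of F. Then for any m ≥ 1, any w ∈ ℝ^m, and any real array (u_{i,s})_{1≤i≤m, 1≤s≤T}: (∑_{i=1}^m wᵢ ∑_{s=1}^T fᵀ(FᵀF)⁻¹f_s · u_{i,s})² ≤ ((F̄²L/ξ)² / T) · (∑_{i=1}^m wᵢ²) · (∑_{i=1}^m ∑_{s=1}^T u_{i,s}²). -/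
/-!
Write `G = FᵀF`. The weights `cₛ = fᵀG⁻¹fₛ` are the coordinates of `F G⁻¹ f`, so that
`∑ₛ cₛ² = fᵀG⁻¹GG⁻¹f = fᵀG⁻¹f` exactly. Since the quadratic form of `G` is at least `ξT‖·‖²`, that
of `G⁻¹` is at most `‖·‖²/(ξT)`, and Cauchy–Schwarz over `i` and over `s` yields the sharper
constant `‖f‖²/(ξT) ≤ (F̄²L/ξ)/T`. Finally `F̄²L/ξ` is at most its square, because the diagonal of
`G/T` lies between `ξ` and `F̄²`.
-/

open Matrix

section SumsOfSquares

variable {R ι τ : Type*} [CommRing R] [LinearOrder R] [IsStrictOrderedRing R]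
  [Fintype ι] [Fintype τ]

theorem sum_sq_le_of_abs_le {g : ι → R} {B : R} (hg : ∀ i, |g i| ≤ B) :
    ∑ i, g i ^ 2 ≤ B ^ 2 * Fintype.card ι := by
  calc ∑ i, g i ^ 2 ≤ ∑ _i : ι, B ^ 2 :=
        Finset.sum_le_sum fun i _ => sq_le_sq.mpr ((hg i).trans (le_abs_self B))
    _ = B ^ 2 * Fintype.card ι := by
        rw [Finset.sum_const, Finset.card_univ, nsmul_eq_mul, mul_comm]

theorem sq_sum_mul_sum_mul_le (w : ι → R) (c : τ → R) (u : ι → τ → R) :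
    (∑ i, w i * ∑ s, c s * u i s) ^ 2 ≤
      (∑ s, c s ^ 2) * (∑ i, w i ^ 2) * ∑ i, ∑ s, u i s ^ 2 := by
  calc (∑ i, w i * ∑ s, c s * u i s) ^ 2
      ≤ (∑ i, w i ^ 2) * ∑ i, (∑ s, c s * u i s) ^ 2 :=
        Finset.sum_mul_sq_le_sq_mul_sq _ _ _
    _ ≤ (∑ i, w i ^ 2) * ∑ i, (∑ s, c s ^ 2) * ∑ s, u i s ^ 2 := by
        gcongr with i
        exact Finset.sum_mul_sq_le_sq_mul_sq _ _ _
    _ = (∑ s, c s ^ 2) * (∑ i, w i ^ 2) * ∑ i, ∑ s, u i s ^ 2 := by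
        rw [← Finset.mul_sum]; ring

end SumsOfSquares

theorem sum_sq_dotProduct_gram_inv_mulVec {R κ τ : Type*} [CommRing R] [Fintype κ]
    [DecidableEq κ] [Fintype τ] {F : Matrix τ κ R} (hF : IsUnit (Fᵀ * F)) (f : κ → R) :
    ∑ s, (f ⬝ᵥ ((Fᵀ * F)⁻¹ *ᵥ F s)) ^ 2 = f ⬝ᵥ ((Fᵀ * F)⁻¹ *ᵥ f) := by
  set a := (Fᵀ * F)⁻¹ *ᵥ f with ha
  have normal_eq : (Fᵀ * F) *ᵥ a = f := by
    rw [ha, mulVec_mulVec, mul_nonsing_inv _ ((isUnit_iff_isUnit_det _).mp hF), one_mulVec]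
  have weight_eq (s : τ) : f ⬝ᵥ ((Fᵀ * F)⁻¹ *ᵥ F s) = (F *ᵥ a) s := by
    have inv_symm : ((Fᵀ * F)⁻¹)ᵀ = (Fᵀ * F)⁻¹ := by
      rw [transpose_nonsing_inv, transpose_mul, transpose_transpose]
    rw [dotProduct_mulVec, ← mulVec_transpose, inv_symm, dotProduct_comm]
    rfl
  calc ∑ s, (f ⬝ᵥ ((Fᵀ * F)⁻¹ *ᵥ F s)) ^ 2 = (F *ᵥ a) ⬝ᵥ (F *ᵥ a) := by
        simp only [weight_eq]
        simp only [sq, dotProduct]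
    _ = ((Fᵀ * F) *ᵥ a) ⬝ᵥ a := by
        rw [dotProduct_mulVec, ← mulVec_transpose, mulVec_mulVec]
    _ = f ⬝ᵥ a := by rw [normal_eq]

/-- The quadratic form of `A` is at least `c` times the squared Euclidean norm. For a real symmetric
matrix this says that the smallest eigenvalue is at least `c`. -/
def QuadFormBoundedBelow {R κ : Type*} [CommRing R] [LE R] [Fintype κ] (c : R)
    (A : Matrix κ κ R) : Prop :=
  ∀ v : κ → R, c * ∑ l, v l ^ 2 ≤ v ⬝ᵥ (A *ᵥ v)

namespace QuadFormBoundedBelow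

theorem le_diag {R κ : Type*} [CommRing R] [LE R] [Fintype κ] {c : R} {A : Matrix κ κ R}
    (hA : QuadFormBoundedBelow c A) (l : κ) : c ≤ A l l := by
  classical
  simpa [Pi.single_apply, ite_pow] using hA (Pi.single l 1)

section OrderedRing

variable {R κ : Type*} [CommRing R] [LinearOrder R] [IsStrictOrderedRing R] [Fintype κ]
  {c : R} {A : Matrix κ κ R}

theorem smul (hA : QuadFormBoundedBelow c A) {t : R} (ht : 0 ≤ t) :
    QuadFormBoundedBelow (t * c) (t • A) := fun v => by
  rw [smul_mulVec, dotProduct_smul, smul_eq_mul, mul_assoc]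
  exact mul_le_mul_of_nonneg_left (hA v) ht

theorem mulVec_injective (hA : QuadFormBoundedBelow c A) (hc : 0 < c) :
    Function.Injective A.mulVec := by
  refine (injective_iff_map_eq_zero A.mulVecLin).mpr fun v hv => ?_
  have hv_le : c * ∑ l, v l ^ 2 ≤ 0 := by
    simpa only [show A *ᵥ v = 0 from hv, dotProduct_zero] using hA v
  have hv_sq : ∑ l, v l ^ 2 = 0 :=
    (nonpos_of_mul_nonpos_right hv_le hc).antisymm (Finset.sum_nonneg fun _ _ => sq_nonneg _)
  exact dotProduct_self_eq_zero.mp (by simpa only [dotProduct, ← sq] using hv_sq)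

end OrderedRing

section OrderedField

variable {K κ τ : Type*} [Field K] [LinearOrder K] [IsStrictOrderedRing K]
  [Fintype κ] [Fintype τ] {c : K}

theorem isUnit [DecidableEq κ] {A : Matrix κ κ K} (hA : QuadFormBoundedBelow c A)
    (hc : 0 < c) : IsUnit A :=
  mulVec_injective_iff_isUnit.mp (hA.mulVec_injective hc)

theorem dotProduct_inv_mulVec_le [DecidableEq κ] {A : Matrix κ κ K}
    (hA : QuadFormBoundedBelow c A) (hc : 0 < c) (f : κ → K) :
    f ⬝ᵥ (A⁻¹ *ᵥ f) ≤ (∑ l, f l ^ 2) / c := by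
  set a := A⁻¹ *ᵥ f with ha
  have hAa : A *ᵥ a = f := by
    rw [ha, mulVec_mulVec, mul_nonsing_inv _ ((isUnit_iff_isUnit_det _).mp (hA.isUnit hc)),
      one_mulVec]
  have energy : c * ∑ l, a l ^ 2 ≤ f ⬝ᵥ a := by
    simpa only [hAa, dotProduct_comm a f] using hA a
  -- Completing the square avoids the division by `‖a‖` that Cauchy–Schwarz would need.
  have square_expansion :
      ∑ l, (c * a l - f l) ^ 2 = c * (c * ∑ l, a l ^ 2) - 2 * c * (f ⬝ᵥ a) + ∑ l, f l ^ 2 := by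
    simp only [dotProduct, Finset.mul_sum, ← Finset.sum_sub_distrib, ← Finset.sum_add_distrib]
    exact Finset.sum_congr rfl fun l _ => by ring
  have square_nonneg : 0 ≤ ∑ l, (c * a l - f l) ^ 2 :=
    Finset.sum_nonneg fun _ _ => sq_nonneg _
  rw [le_div_iff₀ hc]
  linarith [mul_le_mul_of_nonneg_left energy hc.le]

theorem gram_of_inv_card_smul [Nonempty τ] {F : Matrix τ κ K}
    (h : QuadFormBoundedBelow c ((Fintype.card τ : K)⁻¹ • (Fᵀ * F))) :
    QuadFormBoundedBelow (Fintype.card τ * c) (Fᵀ * F) := by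
  have card_ne_zero : (Fintype.card τ : K) ≠ 0 := Nat.cast_ne_zero.mpr Fintype.card_ne_zero
  simpa only [smul_inv_smul₀ card_ne_zero] using h.smul (Nat.cast_nonneg (Fintype.card τ))

theorem le_sq_of_abs_le [Nonempty κ] {F : Matrix τ κ K} {B : K}
    (h : QuadFormBoundedBelow c ((Fintype.card τ : K)⁻¹ • (Fᵀ * F)))
    (hF : ∀ s l, |F s l| ≤ B) : c ≤ B ^ 2 := by
  obtain ⟨l⟩ := ‹Nonempty κ›
  calc c ≤ (Fintype.card τ : K)⁻¹ * ∑ s, F s l ^ 2 := by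
        simpa only [Matrix.smul_apply, mul_apply, transpose_apply, smul_eq_mul, ← sq]
          using h.le_diag l
    _ ≤ (Fintype.card τ : K)⁻¹ * (B ^ 2 * Fintype.card τ) := by
        gcongr
        exact sum_sq_le_of_abs_le fun s => hF s l
    _ = B ^ 2 * (Fintype.card τ * (Fintype.card τ : K)⁻¹) := by ring
    _ ≤ B ^ 2 := mul_le_of_le_one_right (sq_nonneg B) mul_inv_le_one

theorem sum_sq_div_le_of_abs_le [Nonempty κ] {F : Matrix τ κ K} {B : K} {f : κ → K}
    (h : QuadFormBoundedBelow c ((Fintype.card τ : K)⁻¹ • (Fᵀ * F))) (hc : 0 < c)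
    (hF : ∀ s l, |F s l| ≤ B) (hf : ∀ l, |f l| ≤ B) :
    (∑ l, f l ^ 2) / (Fintype.card τ * c) ≤
      (B ^ 2 * Fintype.card κ / c) ^ 2 / Fintype.card τ := by
  have one_le_card : (1 : K) ≤ Fintype.card κ := Nat.one_le_cast.mpr Fintype.card_pos
  have one_le_ratio : 1 ≤ B ^ 2 * Fintype.card κ / c :=
    (one_le_div hc).mpr <| (h.le_sq_of_abs_le hF).trans <|
      le_mul_of_one_le_right (sq_nonneg B) one_le_card
  calc (∑ l, f l ^ 2) / (Fintype.card τ * c)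
      = (∑ l, f l ^ 2) / c / Fintype.card τ := by rw [mul_comm, div_div]
    _ ≤ B ^ 2 * Fintype.card κ / c / Fintype.card τ := by
        gcongr
        exact sum_sq_le_of_abs_le hf
    _ ≤ (B ^ 2 * Fintype.card κ / c) ^ 2 / Fintype.card τ := by
        gcongr
        exact le_self_pow₀ one_le_ratio two_ne_zero

end OrderedField

end QuadFormBoundedBelow

theorem statement11_general {K ι κ τ : Type*} [Field K] [LinearOrder K] [IsStrictOrderedRing K]
    [Fintype ι] [Fintype κ] [DecidableEq κ] [Fintype τ] [Nonempty τ]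
    {F : Matrix τ κ K} {ξ : K} (hξ : 0 < ξ)
    (heig : QuadFormBoundedBelow ξ ((Fintype.card τ : K)⁻¹ • (Fᵀ * F)))
    (f : κ → K) (w : ι → K) (u : ι → τ → K) :
    (∑ i, w i * ∑ s, (f ⬝ᵥ ((Fᵀ * F)⁻¹ *ᵥ F s)) * u i s) ^ 2 ≤
      (∑ l, f l ^ 2) / (Fintype.card τ * ξ) * (∑ i, w i ^ 2) * ∑ i, ∑ s, u i s ^ 2 := by
  have hgram := heig.gram_of_inv_card_smul
  have hc : 0 < Fintype.card τ * ξ := mul_pos (Nat.cast_pos.mpr Fintype.card_pos) hξ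
  have weights_le :
      ∑ s, (f ⬝ᵥ ((Fᵀ * F)⁻¹ *ᵥ F s)) ^ 2 ≤ (∑ l, f l ^ 2) / (Fintype.card τ * ξ) := by
    rw [sum_sq_dotProduct_gram_inv_mulVec (hgram.isUnit hc)]
    exact hgram.dotProduct_inv_mulVec_le hc f
  refine (sq_sum_mul_sum_mul_le w _ u).trans ?_
  gcongr

/-- deterministic Cauchy–Schwarz bound controlling the weighted sums
`∑ᵢ wᵢ ∑ₛ fᵀ(FᵀF)⁻¹fₛ u_{i,s}` appearing in the synthetic control error decomposition.
The smallest-eigenvalue condition is stated equivalently as a quadratic-form lower bound;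
`F s` denotes the `s`-th row of `F`. -/
theorem statement11
    (T L : ℕ) (hT : 1 ≤ T) (hL : 1 ≤ L)
    (F : Matrix (Fin T) (Fin L) ℝ) (Fbar ξ : ℝ) (hFbar : 0 < Fbar) (hξ : 0 < ξ)
    (hbdd : ∀ t l, |F t l| ≤ Fbar)
    (heig : ∀ v : Fin L → ℝ,
      ξ * (∑ l, v l ^ 2) ≤ v ⬝ᵥ (((T : ℝ)⁻¹ • (Fᵀ * F)) *ᵥ v))
    (f : Fin L → ℝ) (hf : ∀ l, |f l| ≤ Fbar)
    (m : ℕ) (hm : 1 ≤ m) (w : Fin m → ℝ) (u : Fin m → Fin T → ℝ) :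
    (∑ i : Fin m, w i * ∑ s : Fin T, (f ⬝ᵥ ((Fᵀ * F)⁻¹ *ᵥ F s)) * u i s) ^ 2 ≤
      ((Fbar ^ 2 * L / ξ) ^ 2 / T) * (∑ i : Fin m, w i ^ 2) *
        (∑ i : Fin m, ∑ s : Fin T, u i s ^ 2) := by
  have : NeZero T := ⟨by lia⟩
  have : NeZero L := ⟨by lia⟩
  have heig' : QuadFormBoundedBelow ξ ((Fintype.card (Fin T) : ℝ)⁻¹ • (Fᵀ * F)) := by
    rwa [Fintype.card_fin]
  refine (statement11_general hξ heig' f w u).trans ?_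
  gcongr ?_ * _ * _
  simpa only [Fintype.card_fin] using heig'.sum_sq_div_le_of_abs_le hξ hbdd hf
end
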